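/- Let x : ℝ → ℝ² be a C², L-periodic, unit-speed curve with tangent τ(θ), normal n(θ) = (−x₂'(θ), x₁'(θ)) and curvature γ(θ) = x₁''(θ)x₂'(θ) − x₁'(θ)x₂''(θ). Let u be a continuously differentiable vector field defined on an open neighborhood of the image of the curve such that u(x(θ))·n(θ) = 0 for every θ. Then for every θ: Σ_{i,j=1}^2 ∂_j(u_i u_j)(x(θ)) n_i(θ) = −γ(θ) ( u(x(θ))·τ(θ) )². -/

import Mathlib

/-!
The product rule gives `∇·(u⊗u) = (u·∇)u + (div u) u`, and the last term is tangential, so only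
`(u·∇)u` contributes to the normal component. Where `u = c x'`, we have `(u·∇)u = c (u ∘ x)'`, and
differentiating the tangency condition `⟪u ∘ x, N⟫ = 0` moves the derivative onto the normal:
`⟪(u·∇)u, N⟫ = -c² ⟪x', N'⟫`, which is the curvature times a square.
-/

open Set

noncomputable section

abbrev E2 := EuclideanSpace ℝ (Fin 2)

/-- Partial derivative in the `i`-th Cartesian coordinate direction. -/
noncomputable def pd (i : Fin 2) (f : E2 → ℝ) (y : E2) : ℝ :=
  fderiv ℝ f y (EuclideanSpace.single i 1)

section AnyDimension

open scoped RealInnerProductSpace Topology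

theorem inner_fderiv_eq_neg_inner_deriv_of_inner_eq_zero {E F : Type*}
    [NormedAddCommGroup E] [NormedSpace ℝ E] [NormedAddCommGroup F] [InnerProductSpace ℝ F]
    {u : E → F} {x : ℝ → E} {N : ℝ → F} {x' : E} {N' : F} {θ : ℝ}
    (hu : DifferentiableAt ℝ u (x θ)) (hx : HasDerivAt x x' θ) (hN : HasDerivAt N N' θ)
    (horth : ∀ᶠ t in 𝓝 θ, ⟪u (x t), N t⟫ = 0) :
    ⟪fderiv ℝ u (x θ) x', N θ⟫ = -⟪u (x θ), N'⟫ := by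
  have hux : HasDerivAt (fun t => u (x t)) (fderiv ℝ u (x θ) x') θ :=
    hu.hasFDerivAt.comp_hasDerivAt θ hx
  have hzero : HasDerivAt (fun t => ⟪u (x t), N t⟫) 0 θ :=
    (hasDerivAt_const θ (0 : ℝ)).congr_of_eventuallyEq horth
  have hsum := (hux.inner ℝ hN).unique hzero
  linarith

theorem fderiv_coord_mul_coord_apply {E ι : Type*} [NormedAddCommGroup E] [NormedSpace ℝ E]
    [Finite ι] {u : E → EuclideanSpace ℝ ι} {y : E} (hu : DifferentiableAt ℝ u y) (i j : ι)
    (v : E) :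
    fderiv ℝ (fun z => u z i * u z j) y v =
      u y i * fderiv ℝ u y v j + u y j * fderiv ℝ u y v i := by
  have := Fintype.ofFinite ι
  have hcoord (k : ι) : HasFDerivAt (fun z => u z k)
      ((EuclideanSpace.proj k : EuclideanSpace ℝ ι →L[ℝ] ℝ).comp (fderiv ℝ u y)) y :=
    (EuclideanSpace.proj k : EuclideanSpace ℝ ι →L[ℝ] ℝ).hasFDerivAt.comp y hu.hasFDerivAt
  rw [((hcoord i).fun_mul (hcoord j)).fderiv]
  simp

variable {ι : Type*} [Fintype ι] [DecidableEq ι]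

/-- The divergence `∑ j, ∂_j u_j` of a vector field in Cartesian coordinates. -/
def vectorDivergence (u : EuclideanSpace ℝ ι → EuclideanSpace ℝ ι) (y : EuclideanSpace ℝ ι) : ℝ :=
  ∑ j, fderiv ℝ u y (EuclideanSpace.single j 1) j

/-- The vector field `∇·(u⊗u)`, the divergence of the momentum flux of `u`, with components
`∑ j, ∂_j (u_i u_j)`. -/
def tensorSelfDivergence (u : EuclideanSpace ℝ ι → EuclideanSpace ℝ ι) (y : EuclideanSpace ℝ ι) :
    EuclideanSpace ℝ ι :=
  WithLp.toLp 2 fun i =>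
    ∑ j, fderiv ℝ (fun z => u z i * u z j) y (EuclideanSpace.single j 1)

variable {u : EuclideanSpace ℝ ι → EuclideanSpace ℝ ι}

theorem tensorSelfDivergence_eq {y : EuclideanSpace ℝ ι} (hu : DifferentiableAt ℝ u y) :
    tensorSelfDivergence u y = fderiv ℝ u y (u y) + vectorDivergence u y • u y := by
  have hexpand : u y = ∑ j, u y j • EuclideanSpace.single j (1 : ℝ) := by
    simpa using ((EuclideanSpace.basisFun ι ℝ).sum_repr (u y)).symm
  have hconv (i : ι) : fderiv ℝ u y (u y) i =
      ∑ j, u y j * fderiv ℝ u y (EuclideanSpace.single j 1) i := by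
    conv_lhs => rw [hexpand]
    simp
  ext i
  simp only [tensorSelfDivergence, vectorDivergence, fderiv_coord_mul_coord_apply hu,
    Finset.sum_add_distrib, PiLp.add_apply, PiLp.smul_apply, smul_eq_mul, hconv, Finset.mul_sum,
    mul_comm, add_comm]

theorem inner_tensorSelfDivergence_eq_of_eq_smul {x N : ℝ → EuclideanSpace ℝ ι}
    {x' N' : EuclideanSpace ℝ ι} {θ c : ℝ} (hu : DifferentiableAt ℝ u (x θ))
    (hx : HasDerivAt x x' θ) (hN : HasDerivAt N N' θ)
    (horth : ∀ᶠ t in 𝓝 θ, ⟪u (x t), N t⟫ = 0) (hpar : u (x θ) = c • x') :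
    ⟪tensorSelfDivergence u (x θ), N θ⟫ = -c ^ 2 * ⟪x', N'⟫ := by
  calc ⟪tensorSelfDivergence u (x θ), N θ⟫
      = ⟪fderiv ℝ u (x θ) (u (x θ)), N θ⟫ := by
        rw [tensorSelfDivergence_eq hu, inner_add_left, real_inner_smul_left,
          horth.self_of_nhds, mul_zero, add_zero]
    _ = c * ⟪fderiv ℝ u (x θ) x', N θ⟫ := by
        conv_lhs => rw [hpar, map_smul, real_inner_smul_left]
    _ = -c ^ 2 * ⟪x', N'⟫ := by
        rw [inner_fderiv_eq_neg_inner_deriv_of_inner_eq_zero hu hx hN horth, hpar,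
          real_inner_smul_left]
        ring

end AnyDimension

section Plane

open scoped RealInnerProductSpace Topology

/-- The counterclockwise rotation of the plane by a right angle, `v ↦ (-v₁, v₀)`; it turns the
tangent of a curve into the normal. -/
def quarterTurn : E2 →L[ℝ] E2 :=
  Matrix.toEuclideanCLM (𝕜 := ℝ) !![0, -1; 1, 0]

@[simp]
theorem quarterTurn_apply_zero (v : E2) : quarterTurn v 0 = -v 1 := by
  simp [quarterTurn, Matrix.vecHead, Matrix.vecTail]

@[simp]
theorem quarterTurn_apply_one (v : E2) : quarterTurn v 1 = v 0 := by
  simp [quarterTurn, Matrix.vecHead, Matrix.vecTail]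

theorem inner_fin_two (v w : E2) : ⟪v, w⟫ = v 0 * w 0 + v 1 * w 1 := by
  simp [PiLp.inner_apply, mul_comm]

theorem eq_smul_of_inner_quarterTurn_eq_zero {v w : E2} (hv : v ≠ 0)
    (h : ⟪w, quarterTurn v⟫ = 0) : w = (⟪w, v⟫ / ‖v‖ ^ 2) • v := by
  have hv' : ‖v‖ ^ 2 ≠ 0 := by simpa using hv
  rw [div_eq_inv_mul, mul_smul, eq_inv_smul_iff₀ hv', ← real_inner_self_eq_norm_sq]
  simp only [inner_fin_two, quarterTurn_apply_zero, quarterTurn_apply_one] at h ⊢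
  ext i
  fin_cases i
  · change (v 0 * v 0 + v 1 * v 1) * w 0 = (w 0 * v 0 + w 1 * v 1) * v 0
    linear_combination -v 1 * h
  · change (v 0 * v 0 + v 1 * v 1) * w 1 = (w 0 * v 0 + w 1 * v 1) * v 1
    linear_combination v 0 * h

/-- The unit tangent vector of a parametrized plane curve; it is `0` where the velocity
vanishes. -/
def unitTangent (x : ℝ → E2) (θ : ℝ) : E2 :=
  ‖deriv x θ‖⁻¹ • deriv x θ

/-- The signed curvature of a parametrized plane curve, with the sign convention in which a
counterclockwise circle has negative curvature; it is `0` where the velocity vanishes. -/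
def signedCurvature (x : ℝ → E2) (θ : ℝ) : ℝ :=
  (deriv (deriv x) θ 0 * deriv x θ 1 - deriv x θ 0 * deriv (deriv x) θ 1) / ‖deriv x θ‖ ^ 3

theorem inner_deriv_quarterTurn_deriv_deriv (x : ℝ → E2) (θ : ℝ) :
    ⟪deriv x θ, quarterTurn (deriv (deriv x) θ)⟫ = signedCurvature x θ * ‖deriv x θ‖ ^ 3 := by
  rcases eq_or_ne (deriv x θ) 0 with hzero | hreg
  · simp [hzero]
  · rw [signedCurvature, div_mul_cancel₀ _ (pow_ne_zero 3 (norm_ne_zero_iff.mpr hreg)),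
      inner_fin_two, quarterTurn_apply_zero, quarterTurn_apply_one]
    ring

theorem stmt_18_general {x : ℝ → E2} {θ : ℝ} (hx : DifferentiableAt ℝ (deriv x) θ)
    (hreg : deriv x θ ≠ 0) {u : E2 → E2} (hu : DifferentiableAt ℝ u (x θ))
    (htan : ∀ᶠ t in 𝓝 θ, ⟪u (x t), quarterTurn (deriv x t)⟫ = 0) :
    ⟪tensorSelfDivergence u (x θ), quarterTurn (unitTangent x θ)⟫ =
      -signedCurvature x θ * ⟪u (x θ), unitTangent x θ⟫ ^ 2 := by
  have hspeed : ‖deriv x θ‖ ≠ 0 := norm_ne_zero_iff.mpr hreg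
  have hvel : HasDerivAt x (deriv x θ) θ := (differentiableAt_of_deriv_ne_zero hreg).hasDerivAt
  have hnormal : HasDerivAt (fun t => quarterTurn (deriv x t))
      (quarterTurn (deriv (deriv x) θ)) θ :=
    quarterTurn.hasFDerivAt.comp_hasDerivAt θ hx.hasDerivAt
  have hpar := eq_smul_of_inner_quarterTurn_eq_zero hreg htan.self_of_nhds
  rw [unitTangent, map_smul, real_inner_smul_right, real_inner_smul_right,
    inner_tensorSelfDivergence_eq_of_eq_smul hu hvel hnormal htan hpar,
    inner_deriv_quarterTurn_deriv_deriv]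
  field_simp

end Plane

theorem stmt_18
    (L : ℝ) (hL : 0 < L)
    (x : ℝ → E2) (hx : ContDiff ℝ 2 x)
    (hper : ∀ θ, x (θ + L) = x θ)
    (hunit : ∀ θ, deriv x θ 0 ^ 2 + deriv x θ 1 ^ 2 = 1)
    (τ n : ℝ → E2) (γ : ℝ → ℝ)
    (hτ : ∀ θ, τ θ = deriv x θ)
    (hn : ∀ θ, n θ 0 = -(deriv x θ 1) ∧ n θ 1 = deriv x θ 0)
    (hγ : ∀ θ, γ θ = deriv (deriv x) θ 0 * deriv x θ 1 - deriv x θ 0 * deriv (deriv x) θ 1)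
    -- a C¹ vector field on an open neighborhood of the curve, tangent to the curve
    (U : Set E2) (hU : IsOpen U) (hΓU : Set.range x ⊆ U)
    (u : E2 → E2) (hu : ContDiffOn ℝ 1 u U)
    (htan : ∀ θ, u (x θ) 0 * n θ 0 + u (x θ) 1 * n θ 1 = 0) :
    ∀ θ : ℝ,
      (pd 0 (fun y => u y 0 * u y 0) (x θ) + pd 1 (fun y => u y 0 * u y 1) (x θ)) * n θ 0 +
      (pd 0 (fun y => u y 1 * u y 0) (x θ) + pd 1 (fun y => u y 1 * u y 1) (x θ)) * n θ 1 =
        -(γ θ) * (u (x θ) 0 * τ θ 0 + u (x θ) 1 * τ θ 1) ^ 2 := by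
  intro θ
  have hspeed : ‖deriv x θ‖ = 1 := by simp [EuclideanSpace.norm_eq, hunit]
  have hreg : deriv x θ ≠ 0 := norm_ne_zero_iff.mp (hspeed ▸ one_ne_zero)
  have hx' : DifferentiableAt ℝ (deriv x) θ := hx.differentiable_deriv_two θ
  have hu' : DifferentiableAt ℝ u (x θ) :=
    (hu.differentiableOn one_ne_zero).differentiableAt (hU.mem_nhds (hΓU (mem_range_self θ)))
  have hn' (t : ℝ) : n t = quarterTurn (deriv x t) := by
    ext i
    fin_cases i <;> simp [hn]
  have htan' (t : ℝ) : inner ℝ (u (x t)) (quarterTurn (deriv x t)) = 0 := by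
    rw [inner_fin_two, ← hn', htan]
  simpa [inner_fin_two, tensorSelfDivergence, Fin.sum_univ_two, pd, unitTangent, signedCurvature,
    hspeed, hn', hτ, hγ] using stmt_18_general hx' hreg hu' (.of_forall htan')
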